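/- Let G be a simple graph containing an induced 1-chord subgraph H, with V(H) = {u, a, z₁, …, z_l = v, y₁, …, y_k = b} (l ≥ 1, k ≥ 1) and edges {u,a}, {a,z₁}, the path edges {z_i, z_{i+1}} for 1 ≤ i ≤ l−1, {v,y₁}, the path edges {y_j, y_{j+1}} for 1 ≤ j ≤ k−1, {b,u}, and the chord {u,v}. Then there exists a minimal (a,b) vertex separator S of G with {u,v} ⊆ S; in particular S is not an independent set. -/

import Mathlib

/-!
Removing `u` and `v` from the cycle leaves two paths: `P = {a, z₁, …, z_{l-1}}` and
`Q = {y₁, …, y_k = b}`, which are connected, disjoint and joined by no edge, while `u` and `v`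
both have a neighbour in each of them. Let `S₀` be the set of vertices outside `P` with a neighbour
in `P`; it separates `P` from `Q`. Let `B ⊇ Q` be the component of `b` in `G \ S₀`, and let `S` be the
set of vertices of `S₀` with a neighbour in `B`. Then `S` still separates `a` from `b`, and every
vertex of `S` has a neighbour both in `P` and in `B`, so putting any `s ∈ S` back creates a path
from `a` through `P`, `s` and `B` to `b`: the separator is minimal. It contains `u` and `v`, as these
have neighbours in `P` and in `Q ⊆ B`. The graph-theoretic core is
`exists_minSeparator_of_connected_sides`.
-/

/-- Reachability in `G` by a walk all of whose vertices avoid the set `S`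
(i.e. reachability in the induced subgraph `G \ S`). -/
def ReachAvoid {V : Type*} (G : SimpleGraph V) (S : Set V) (x y : V) : Prop :=
  ∃ w : G.Walk x y, ∀ z ∈ w.support, z ∉ S

/-- `S` is an `(a,b)` vertex separator: `a, b ∉ S` and `a`, `b` lie in distinct
connected components of `G \ S`. -/
def IsABSeparator {V : Type*} (G : SimpleGraph V) (a b : V) (S : Set V) : Prop :=
  a ∉ S ∧ b ∉ S ∧ ¬ ReachAvoid G S a b

/-- `S` is a minimal `(a,b)` vertex separator: it is one, and no proper subset is. -/
def IsMinABSeparator {V : Type*} (G : SimpleGraph V) (a b : V) (S : Set V) : Prop :=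
  IsABSeparator G a b S ∧ ∀ S' ⊂ S, ¬ IsABSeparator G a b S'

/-- `S` is a stable (independent) set of vertices of `G`. -/
def IsStableSet {V : Type*} (G : SimpleGraph V) (S : Set V) : Prop :=
  ∀ u ∈ S, ∀ v ∈ S, ¬ G.Adj u v

/-- `W` induces a 1-chord subgraph of `G`: a cycle of length `n ≥ 4`
(vertices `f 0, f 1, …` in cyclic order) together with exactly one chord
`{f i, f j}`, and no other edges among the vertices of `W` (induced). -/
def IsOneChordSet {V : Type*} (G : SimpleGraph V) (W : Set V) : Prop :=
  ∃ n : ℕ, 4 ≤ n ∧ ∃ f : ZMod n → V, Function.Injective f ∧ Set.range f = W ∧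
    ∃ i j : ZMod n, j ≠ i ∧ j ≠ i + 1 ∧ i ≠ j + 1 ∧
      ∀ x y : ZMod n, G.Adj (f x) (f y) ↔
        ((y = x + 1 ∨ x = y + 1) ∨ (x = i ∧ y = j) ∨ (x = j ∧ y = i))

/-- `G` is 1-chord free: no induced cycle of length at least 4 with exactly one chord. -/
def OneChordFree {V : Type*} (G : SimpleGraph V) : Prop :=
  ∀ W : Set V, ¬ IsOneChordSet G W

section ReachAvoidLemmas

variable {V : Type*} {G : SimpleGraph V} {S T : Set V} {x y z : V}

theorem ReachAvoid.refl (hx : x ∉ S) : ReachAvoid G S x x :=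
  ⟨.nil, by simpa using hx⟩

theorem ReachAvoid.cons (hx : x ∉ S) (h : G.Adj x y) (hr : ReachAvoid G S y z) :
    ReachAvoid G S x z := by
  obtain ⟨w, hw⟩ := hr
  refine ⟨.cons h w, fun t ht => ?_⟩
  rw [SimpleGraph.Walk.support_cons, List.mem_cons] at ht
  rcases ht with rfl | ht
  · exact hx
  · exact hw t ht

theorem ReachAvoid.trans (h₁ : ReachAvoid G S x y) (h₂ : ReachAvoid G S y z) :
    ReachAvoid G S x z := by
  obtain ⟨w₁, hw₁⟩ := h₁
  obtain ⟨w₂, hw₂⟩ := h₂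
  refine ⟨w₁.append w₂, fun t ht => ?_⟩
  rw [SimpleGraph.Walk.mem_support_append_iff] at ht
  exact ht.elim (hw₁ t) (hw₂ t)

theorem ReachAvoid.mono (hST : S ⊆ T) (h : ReachAvoid G T x y) : ReachAvoid G S x y := by
  obtain ⟨w, hw⟩ := h
  exact ⟨w, fun t ht hS => hw t ht (hST hS)⟩

theorem ReachAvoid.left_notMem (h : ReachAvoid G S x y) : x ∉ S := by
  obtain ⟨w, hw⟩ := h
  exact hw x w.start_mem_support

theorem ReachAvoid.right_notMem (h : ReachAvoid G S x y) : y ∉ S := by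
  obtain ⟨w, hw⟩ := h
  exact hw y w.end_mem_support

/-- A set closed under passing to neighbours outside `S` is never left by a walk avoiding `S`. -/
theorem ReachAvoid.mem_of_closed {P : Set V} (hP : ∀ p ∈ P, ∀ q, G.Adj p q → q ∉ S → q ∈ P)
    (h : ReachAvoid G S x y) (hx : x ∈ P) : y ∈ P := by
  obtain ⟨w, hw⟩ := h
  induction w with
  | nil => exact hx
  | cons hadj w ih =>
    have hw' : ∀ t ∈ w.support, t ∉ S := fun t ht => hw t (by simp [ht])
    exact ih (hP _ hx _ hadj (hw' _ w.start_mem_support)) hw'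

theorem ReachAvoid.symm (h : ReachAvoid G S x y) : ReachAvoid G S y x := by
  obtain ⟨w, hw⟩ := h
  exact ⟨w.reverse, fun t ht => hw t (by simpa using ht)⟩

end ReachAvoidLemmas

/-- If `P ∋ a` and `Q ∋ b` are connected sets, disjoint and with no edge between them, then some
minimal `(a,b)` separator contains every vertex outside `P` with a neighbour in `P` and one in
`Q`. Connectedness of `P` is expressed as reachability from `a` avoiding the complement of `P`,
and similarly for `Q`. -/
theorem exists_minSeparator_of_connected_sides {V : Type*} (G : SimpleGraph V) {a b : V}
    {P Q : Set V} (ha : a ∈ P) (hb : b ∈ Q)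
    (hP : ∀ p ∈ P, ReachAvoid G Pᶜ a p) (hQ : ∀ q ∈ Q, ReachAvoid G Qᶜ q b)
    (hPQ : Disjoint P Q) (hnadj : ∀ p ∈ P, ∀ q ∈ Q, ¬ G.Adj p q) :
    ∃ S : Set V, IsMinABSeparator G a b S ∧
      ∀ x ∉ P, (∃ p ∈ P, G.Adj p x) → (∃ q ∈ Q, G.Adj x q) → x ∈ S := by
  let S₀ : Set V := {x | x ∉ P ∧ ∃ p ∈ P, G.Adj p x}
  let B : Set V := {x | ReachAvoid G S₀ x b}
  let S : Set V := {x | x ∈ S₀ ∧ ∃ y ∈ B, G.Adj x y}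
  have hSS₀ : S ⊆ S₀ := fun x hx => hx.1
  have hPS₀ : S₀ ⊆ Pᶜ := fun x hx => hx.1
  have hQS₀ : S₀ ⊆ Qᶜ := by
    rintro x ⟨-, p, hp, hpx⟩ hxQ
    exact hnadj p hp x hxQ hpx
  have hQB : Q ⊆ B := fun q hq => (hQ q hq).mono hQS₀
  have hbP : b ∉ P := fun h => Set.disjoint_left.1 hPQ h hb
  refine ⟨S, ⟨⟨fun h => hPS₀ (hSS₀ h) ha, fun h => hQS₀ (hSS₀ h) hb, fun h => ?_⟩, ?_⟩, ?_⟩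
  · -- A walk from `b` avoiding `S` cannot leave `B`, and one from `a` avoiding `S₀` cannot leave `P`.
    have haB : a ∈ B := by
      refine h.symm.mem_of_closed (P := B) (fun p hp q hpq hq => ?_) (hQB hb)
      exact ReachAvoid.cons (fun hq₀ => hq ⟨hq₀, p, hp, hpq.symm⟩) hpq.symm hp
    refine hbP (ReachAvoid.mem_of_closed (P := P) (fun p hp q hpq hq => ?_) haB ha)
    by_contra hqP
    exact hq ⟨hqP, p, hp, hpq⟩
  · rintro S' hS' ⟨-, -, hsep⟩
    obtain ⟨s, hs, hsS'⟩ := Set.exists_of_ssubset hS'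
    obtain ⟨⟨-, p, hp, hps⟩, y, hy, hsy⟩ := hs
    have hS'S₀ : S' ⊆ S₀ := hS'.subset.trans hSS₀
    have hap : ReachAvoid G S' a p := (hP p hp).mono (hS'S₀.trans hPS₀)
    have hsb : ReachAvoid G S' s b := ReachAvoid.cons hsS' hsy (ReachAvoid.mono hS'S₀ hy)
    exact hsep (hap.trans (hsb.cons hap.right_notMem hps))
  · rintro x hxP hx ⟨q, hq, hxq⟩
    exact ⟨⟨hxP, hx⟩, q, hQB hq, hxq⟩

theorem zmod_natCast_inj_of_lt {n i j : ℕ} (hi : i < n) (hj : j < n)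
    (h : (i : ZMod n) = (j : ZMod n)) : i = j := by
  rw [ZMod.natCast_eq_natCast_iff'] at h
  rwa [Nat.mod_eq_of_lt hi, Nat.mod_eq_of_lt hj] at h

/-- Suppose `G` contains an induced 1-chord subgraph with
vertex set `{u, a, z₁, …, z_l = v, y₁, …, y_k = b}` (`l, k ≥ 1`), cycle
`u, a, z₁, …, z_l = v, y₁, …, y_k = b, u` and chord `{u,v}`.  Here the cycle is
given by an injection `f : ZMod (l+k+2) → V` with `u = f 0`, `a = f 1`,
`v = f (l+1)`, `b = f (l+k+1)`, and the adjacency on the image of `f` is exactly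
the cycle edges together with the chord `{f 0, f (l+1)}`.  Then there is a
minimal `(a,b)` vertex separator `S` containing both `u` and `v`; in particular
`S` is not a stable set. -/
theorem stmt_11 {V : Type*} [Fintype V] (G : SimpleGraph V) (l k : ℕ)
    (hl : 1 ≤ l) (hk : 1 ≤ k)
    (f : ZMod (l + k + 2) → V) (hinj : Function.Injective f)
    (hadj : ∀ x y : ZMod (l + k + 2), G.Adj (f x) (f y) ↔
      ((y = x + 1 ∨ x = y + 1) ∨
        (x = 0 ∧ y = ((l + 1 : ℕ) : ZMod (l + k + 2))) ∨
        (x = ((l + 1 : ℕ) : ZMod (l + k + 2)) ∧ y = 0))) :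
    ∃ S : Set V,
      IsMinABSeparator G (f 1) (f ((l + k + 1 : ℕ) : ZMod (l + k + 2))) S ∧
      f 0 ∈ S ∧ f ((l + 1 : ℕ) : ZMod (l + k + 2)) ∈ S ∧ ¬ IsStableSet G S := by
  have hcyc : ∀ i : ℕ, G.Adj (f (i : ZMod (l + k + 2))) (f ((i + 1 : ℕ) : ZMod (l + k + 2))) :=
    fun i => (hadj _ _).2 (Or.inl (Or.inl (by push_cast; rfl)))
  have hzero : ((l + k + 2 : ℕ) : ZMod (l + k + 2)) = 0 := ZMod.natCast_self _
  have hchord : G.Adj (f 0) (f ((l + 1 : ℕ) : ZMod (l + k + 2))) :=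
    (hadj _ _).2 (Or.inr (Or.inl ⟨rfl, rfl⟩))
  have hfinj : ∀ i j : ℕ, i < l + k + 2 → j < l + k + 2 →
      f (i : ZMod (l + k + 2)) = f (j : ZMod (l + k + 2)) → i = j :=
    fun i j hi hj h => zmod_natCast_inj_of_lt hi hj (hinj h)
  let P : Set V := {x | ∃ i : ℕ, 1 ≤ i ∧ i ≤ l ∧ f (i : ZMod (l + k + 2)) = x}
  let Q : Set V := {x | ∃ i : ℕ, l + 2 ≤ i ∧ i ≤ l + k + 1 ∧ f (i : ZMod (l + k + 2)) = x}
  have ha : f 1 ∈ P := ⟨1, le_rfl, hl, by rw [Nat.cast_one]⟩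
  have hb : f ((l + k + 1 : ℕ) : ZMod (l + k + 2)) ∈ Q := ⟨l + k + 1, by omega, le_rfl, rfl⟩
  have hP : ∀ p ∈ P, ReachAvoid G Pᶜ (f 1) p := by
    rintro _ ⟨i, hi, hil, rfl⟩
    induction i, hi using Nat.le_induction with
    | base => rw [Nat.cast_one]; exact ReachAvoid.refl (fun h => h ha)
    | succ i hi ih =>
      have hmem : f ((i + 1 : ℕ) : ZMod (l + k + 2)) ∈ P := ⟨i + 1, by omega, hil, rfl⟩
      have hi' := (ih (by omega)).symm
      exact (hi'.cons (not_not_intro hmem) (hcyc i).symm).symm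
  have hQ : ∀ q ∈ Q, ReachAvoid G Qᶜ q (f ((l + k + 1 : ℕ) : ZMod (l + k + 2))) := by
    rintro _ ⟨i, hi, hil, rfl⟩
    induction hil using Nat.decreasingInduction with
    | self => exact ReachAvoid.refl (fun h => h hb)
    | of_succ i hil ih =>
      have hmem : f (i : ZMod (l + k + 2)) ∈ Q := ⟨i, hi, by omega, rfl⟩
      exact (ih (by omega)).cons (fun h => h hmem) (hcyc i)
  have hPQ : Disjoint P Q := by
    rw [Set.disjoint_left]
    rintro _ ⟨i, hi, hil, rfl⟩ ⟨j, hj, hjl, hij⟩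
    have := hfinj j i (by omega) (by omega) hij
    omega
  have hnadj : ∀ p ∈ P, ∀ q ∈ Q, ¬ G.Adj p q := by
    rintro _ ⟨i, hi, hil, rfl⟩ _ ⟨j, hj, hjl, rfl⟩ h
    rcases (hadj _ _).1 h with (h | h) | ⟨h, -⟩ | ⟨h, -⟩
    · have := zmod_natCast_inj_of_lt (n := l + k + 2) (i := j) (j := i + 1) (by omega) (by omega)
        (by rw [h, Nat.cast_succ])
      omega
    · -- For `j = l + k + 1` the successor wraps around to `0`.
      rcases Nat.lt_or_ge (j + 1) (l + k + 2) with hlt | hge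
      · have := zmod_natCast_inj_of_lt (n := l + k + 2) (i := i) (j := j + 1) (by omega) hlt
          (by rw [h, Nat.cast_succ])
        omega
      · have hj' : j + 1 = l + k + 2 := by omega
        have := zmod_natCast_inj_of_lt (n := l + k + 2) (i := i) (j := 0) (by omega) (by omega)
          (by rw [h, ← Nat.cast_succ, Nat.succ_eq_add_one, hj', hzero, Nat.cast_zero])
        omega
    · have := zmod_natCast_inj_of_lt (n := l + k + 2) (i := i) (j := 0) (by omega) (by omega)
        (by rw [h, Nat.cast_zero])
      omega
    · have := zmod_natCast_inj_of_lt (n := l + k + 2) (by omega) (by omega) h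
      omega
  obtain ⟨S, hS, hmem⟩ := exists_minSeparator_of_connected_sides G ha hb hP hQ hPQ hnadj
  have hu : f 0 ∈ S := by
    refine hmem _ ?_ ⟨f 1, ha, ?_⟩ ⟨_, hb, ?_⟩
    · rintro ⟨i, hi, hil, h⟩
      have := hfinj i 0 (by omega) (by omega) (by rw [h, Nat.cast_zero])
      omega
    · simpa using (hcyc 0).symm
    · exact hzero ▸ (hcyc (l + k + 1)).symm
  have hv : f ((l + 1 : ℕ) : ZMod (l + k + 2)) ∈ S := by
    refine hmem _ ?_ ⟨_, ⟨l, hl, le_rfl, rfl⟩, hcyc l⟩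
      ⟨_, ⟨l + 2, le_rfl, by omega, rfl⟩, hcyc (l + 1)⟩
    rintro ⟨i, hi, hil, h⟩
    have := hfinj i (l + 1) (by omega) (by omega) h
    omega
  exact ⟨S, hS, hu, hv, fun h => h _ hu _ hv hchord⟩
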